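/- Let −1 < β < 0 and ν > −1/2. Then for all x > 0, ( e^{−βx} K_{ν+2}(x) / x^{ν−1} ) · ∫_0^x e^{βt} t^ν I_ν(t) dt < (2ν+7) / ((2ν+1)(1+β)). -/

import Mathlib

open Real MeasureTheory

/-- Modified Bessel function of the first kind, `I_ν(x) = ∑_{k} (x/2)^{ν+2k} / (Γ(ν+k+1) k!)`. -/
noncomputable def besselI (ν x : ℝ) : ℝ :=
  ∑' k : ℕ, (x / 2) ^ (ν + 2 * (k : ℝ)) / (Real.Gamma (ν + (k : ℝ) + 1) * (Nat.factorial k : ℝ))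

/-- Modified Bessel function of the second kind, `K_ν(x) = ∫_0^∞ e^{-x cosh t} cosh(ν t) dt`. -/
noncomputable def besselK (ν x : ℝ) : ℝ :=
  ∫ t in Set.Ioi (0 : ℝ), Real.exp (-x * Real.cosh t) * Real.cosh (ν * t)

/-- Lower incomplete gamma function `γ(a, x) = ∫_0^x t^{a-1} e^{-t} dt`. -/
noncomputable def lowerIncGamma (a x : ℝ) : ℝ :=
  ∫ t in (0 : ℝ)..x, t ^ (a - 1) * Real.exp (-t)

/-!
The proof separates the integral from `K`. First, for every `β ≥ -1`, the integral is compared with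
`M(x) = e^{βx} x^{ν+1} (I_ν(x) + I_{ν+1}(x)) c(x)`, where `c` is rational: both vanish at `0`, and
`M' ≥ e^{βx} x^ν I_ν(x)` because `x^{ν+1} (I_ν + I_{ν+1})` satisfies a first-order linear equation
with right-hand side `(2ν+1) x^ν I_ν`. After this step only `x² K_{ν+2} (I_ν + I_{ν+1})` has to be
bounded. The recurrences express it through the Wronskian
`x (I_{ν+1} K_{ν+2} + I_{ν+2} K_{ν+1}) = 1`, up to a term whose sign follows from `K_ν ≤ K_{ν+1}`,
and this gives the bound `2ν + 2 + x`. The two estimates multiply to an explicit rational function.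
-/

open Set Filter
open scoped Topology Nat

/-! ### The Bessel–Clifford function -/

/-- Coefficients `1 / (Γ(ν + k + 1) k!)` of the Bessel–Clifford function. They follow the convention
`1 / Γ = 0` at the poles of `Γ`, which agrees with the junk values `Γ(-n) = 0` and `0⁻¹ = 0`. -/
noncomputable def besselCliffordCoeff (ν : ℝ) (k : ℕ) : ℝ :=
  (Real.Gamma (ν + k + 1) * k !)⁻¹

/-- The Bessel–Clifford function `C_ν(y) = ∑_k y^k / (Γ(ν + k + 1) k!)`, the entire factor in
`I_ν(x) = (x/2)^ν C_ν(x²/4)`. -/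
noncomputable def besselClifford (ν y : ℝ) : ℝ :=
  ∑' k : ℕ, besselCliffordCoeff ν k * y ^ k

theorem inv_Gamma_eq_self_mul_inv_Gamma_add_one (s : ℝ) :
    (Real.Gamma s)⁻¹ = s * (Real.Gamma (s + 1))⁻¹ := by
  rcases eq_or_ne s 0 with rfl | hs
  · simp [Real.Gamma_zero]
  · rw [Real.Gamma_add_one hs, mul_inv, mul_inv_cancel_left₀ hs]

theorem besselCliffordCoeff_eq_mul_add_one (ν : ℝ) (k : ℕ) :
    besselCliffordCoeff ν k = (ν + k + 1) * besselCliffordCoeff (ν + 1) k := by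
  rw [besselCliffordCoeff, besselCliffordCoeff, mul_inv, mul_inv,
    inv_Gamma_eq_self_mul_inv_Gamma_add_one]
  ring_nf

theorem besselCliffordCoeff_succ_mul (ν : ℝ) (k : ℕ) :
    besselCliffordCoeff ν (k + 1) * (k + 1) = besselCliffordCoeff (ν + 1) k := by
  have hshift : ν + ((k + 1 : ℕ) : ℝ) + 1 = ν + 1 + k + 1 := by push_cast; ring
  rw [besselCliffordCoeff, besselCliffordCoeff, hshift, Nat.factorial_succ]
  push_cast
  field_simp

theorem besselCliffordCoeff_pos {ν : ℝ} (hν : -1 < ν) (k : ℕ) : 0 < besselCliffordCoeff ν k := by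
  have := Real.Gamma_pos_of_pos (show 0 < ν + k + 1 by linarith [k.cast_nonneg (α := ℝ)])
  unfold besselCliffordCoeff
  positivity

theorem summable_besselClifford (ν y : ℝ) :
    Summable fun k : ℕ ↦ besselCliffordCoeff ν k * y ^ k := by
  refine summable_of_ratio_norm_eventually_le (r := 1 / 2) (by norm_num) ?_
  filter_upwards [eventually_ge_atTop ⌈2 * |y| - ν⌉₊] with k hk
  have hratio : |y| ≤ 1 / 2 * ((ν + k + 1) * (k + 1)) := by
    have hk' : 2 * |y| ≤ ν + k + 1 := by linarith [Nat.ceil_le.mp hk]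
    nlinarith [abs_nonneg y, k.cast_nonneg (α := ℝ)]
  have hcoeff : besselCliffordCoeff ν k =
      (ν + k + 1) * (k + 1) * besselCliffordCoeff ν (k + 1) := by
    rw [besselCliffordCoeff_eq_mul_add_one, ← besselCliffordCoeff_succ_mul]
    ring
  have hfactor : 0 ≤ (ν + k + 1) * (k + 1) := by linarith [abs_nonneg y]
  calc ‖besselCliffordCoeff ν (k + 1) * y ^ (k + 1)‖
      = |y| * (|besselCliffordCoeff ν (k + 1)| * |y| ^ k) := by
        rw [Real.norm_eq_abs, abs_mul, abs_pow, pow_succ]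
        ring
    _ ≤ 1 / 2 * ((ν + k + 1) * (k + 1)) * (|besselCliffordCoeff ν (k + 1)| * |y| ^ k) := by
        gcongr
    _ = 1 / 2 * ‖besselCliffordCoeff ν k * y ^ k‖ := by
        rw [hcoeff, Real.norm_eq_abs, abs_mul, abs_mul, abs_of_nonneg hfactor, abs_pow]
        ring

theorem besselClifford_zero (ν : ℝ) : besselClifford ν 0 = (Real.Gamma (ν + 1))⁻¹ := by
  rw [besselClifford, tsum_eq_single 0 fun k hk ↦ by simp [hk]]
  simp [besselCliffordCoeff]

theorem besselClifford_pos {ν y : ℝ} (hν : -1 < ν) (hy : 0 ≤ y) : 0 < besselClifford ν y :=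
  (summable_besselClifford ν y).tsum_pos
    (fun k ↦ mul_nonneg (besselCliffordCoeff_pos hν k).le (pow_nonneg hy k)) 0
    (by simpa using besselCliffordCoeff_pos hν 0)

theorem besselClifford_eq_add_tsum (ν y : ℝ) :
    besselClifford ν y =
      besselCliffordCoeff ν 0 + ∑' k : ℕ, besselCliffordCoeff ν (k + 1) * y ^ (k + 1) := by
  rw [besselClifford, (summable_besselClifford ν y).tsum_eq_zero_add, pow_zero, mul_one]

theorem hasDerivAt_besselClifford (ν y : ℝ) :
    HasDerivAt (besselClifford ν) (besselClifford (ν + 1) y) y := by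
  have hterm (k : ℕ) (z : ℝ) : HasDerivAt (fun z ↦ besselCliffordCoeff ν (k + 1) * z ^ (k + 1))
      (besselCliffordCoeff (ν + 1) k * z ^ k) z := by
    convert! (hasDerivAt_pow (k + 1) z).const_mul (besselCliffordCoeff ν (k + 1)) using 1
    rw [← besselCliffordCoeff_succ_mul]
    push_cast
    rw [mul_assoc]
  have hbound (k : ℕ) (z : ℝ) (hz : z ∈ Metric.ball 0 (|y| + 1)) :
      ‖besselCliffordCoeff (ν + 1) k * z ^ k‖ ≤
        ‖besselCliffordCoeff (ν + 1) k * (|y| + 1) ^ k‖ := by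
    have hz' : ‖z‖ ≤ ‖|y| + 1‖ := by
      rw [Real.norm_of_nonneg (r := |y| + 1) (by positivity)]
      exact (mem_ball_zero_iff.mp hz).le
    rw [norm_mul, norm_mul, norm_pow, norm_pow]
    gcongr
  have hy : y ∈ Metric.ball 0 (|y| + 1) := by simp
  have htsum := hasDerivAt_tsum_of_isPreconnected (summable_besselClifford (ν + 1) (|y| + 1)).norm
    Metric.isOpen_ball (convex_ball 0 _).isPreconnected (fun k z _ ↦ hterm k z) hbound hy
    ((summable_nat_add_iff 1).mpr (summable_besselClifford ν y)) hy
  rw [funext (besselClifford_eq_add_tsum ν)]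
  exact htsum.const_add _

@[fun_prop]
theorem continuous_besselClifford (ν : ℝ) : Continuous (besselClifford ν) :=
  continuous_iff_continuousAt.mpr fun y ↦ (hasDerivAt_besselClifford ν y).continuousAt

theorem besselClifford_recurrence (ν y : ℝ) :
    besselClifford ν y = (ν + 1) * besselClifford (ν + 1) y + y * besselClifford (ν + 2) y := by
  have hcoeff (k : ℕ) : besselCliffordCoeff ν (k + 1) =
      (ν + 1) * besselCliffordCoeff (ν + 1) (k + 1) + besselCliffordCoeff (ν + 2) k := by
    rw [besselCliffordCoeff_eq_mul_add_one, show ν + 2 = ν + 1 + 1 by ring,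
      ← besselCliffordCoeff_succ_mul (ν + 1)]
    push_cast
    ring
  have hsum₁ := ((summable_nat_add_iff 1).mpr (summable_besselClifford (ν + 1) y)).mul_left (ν + 1)
  have hsum₂ := (summable_besselClifford (ν + 2) y).mul_left y
  rw [besselClifford_eq_add_tsum ν, besselClifford_eq_add_tsum (ν + 1), besselClifford, mul_add,
    add_assoc, ← tsum_mul_left, ← tsum_mul_left, ← hsum₁.tsum_add hsum₂]
  congr 1
  · simpa using besselCliffordCoeff_eq_mul_add_one ν 0
  · refine tsum_congr fun k ↦ ?_
    rw [hcoeff]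
    ring

/-! ### The function `I_ν` -/

theorem besselI_eq_rpow_mul_besselClifford (ν : ℝ) {x : ℝ} (hx : 0 < x) :
    besselI ν x = (x / 2) ^ ν * besselClifford ν ((x / 2) ^ 2) := by
  rw [besselI, besselClifford, ← tsum_mul_left]
  refine tsum_congr fun k ↦ ?_
  rw [Real.rpow_add (by positivity), Real.rpow_mul (by positivity), Real.rpow_natCast,
    Real.rpow_two, besselCliffordCoeff]
  ring

theorem besselI_pos {ν x : ℝ} (hν : -1 < ν) (hx : 0 < x) : 0 < besselI ν x := by
  have := besselClifford_pos hν (sq_nonneg (x / 2))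
  rw [besselI_eq_rpow_mul_besselClifford ν hx]
  positivity

theorem besselI_recurrence (ν : ℝ) {x : ℝ} (hx : 0 < x) :
    2 * (ν + 1) * besselI (ν + 1) x = x * (besselI ν x - besselI (ν + 2) x) := by
  simp only [besselI_eq_rpow_mul_besselClifford _ hx]
  rw [besselClifford_recurrence ν, Real.rpow_add_one (by positivity),
    Real.rpow_add (by positivity), Real.rpow_two]
  ring

theorem hasDerivAt_besselI (ν : ℝ) {x : ℝ} (hx : 0 < x) :
    HasDerivAt (besselI ν) (besselI (ν + 1) x + ν / x * besselI ν x) x := by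
  have hpow : HasDerivAt (fun z : ℝ ↦ (z / 2) ^ ν) (1 / 2 * ν * (x / 2) ^ (ν - 1)) x :=
    ((hasDerivAt_id x).div_const 2).rpow_const (Or.inl (half_pos hx).ne')
  have hsq : HasDerivAt (fun z : ℝ ↦ (z / 2) ^ 2) (x / 2) x := by
    convert! ((hasDerivAt_id x).div_const 2).pow 2 using 1
    simp only [id, Nat.cast_ofNat]
    ring
  have hprod := hpow.mul ((hasDerivAt_besselClifford ν ((x / 2) ^ 2)).comp x hsq)
  have heq : besselI ν =ᶠ[𝓝 x] fun z ↦ (z / 2) ^ ν * besselClifford ν ((z / 2) ^ 2) := by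
    filter_upwards [lt_mem_nhds hx] with z hz using besselI_eq_rpow_mul_besselClifford ν hz
  convert! hprod.congr_of_eventuallyEq heq using 1
  rw [besselI_eq_rpow_mul_besselClifford _ hx, besselI_eq_rpow_mul_besselClifford _ hx,
    Real.rpow_add_one (by positivity), Real.rpow_sub_one (by positivity)]
  simp only [Function.comp_apply]
  field_simp
  ring

theorem hasDerivAt_besselI_add_one (ν : ℝ) {x : ℝ} (hx : 0 < x) :
    HasDerivAt (besselI (ν + 1)) (besselI ν x - (ν + 1) / x * besselI (ν + 1) x) x := by
  convert! hasDerivAt_besselI (ν + 1) hx using 1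
  rw [show ν + 1 + 1 = ν + 2 by ring]
  have hrec := besselI_recurrence ν hx
  field_simp
  linear_combination -hrec

theorem rpow_mul_besselI (a ν : ℝ) {x : ℝ} (hx : 0 < x) :
    x ^ a * besselI ν x = (1 / 2) ^ ν * (x ^ (a + ν) * besselClifford ν ((x / 2) ^ 2)) := by
  rw [besselI_eq_rpow_mul_besselClifford ν hx, div_eq_mul_one_div x 2,
    Real.mul_rpow hx.le (by norm_num), Real.rpow_add hx]
  ring

theorem continuousOn_rpow_mul_besselI {a ν : ℝ} (ha : 0 < a) (haν : 0 < a + ν) :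
    ContinuousOn (fun x ↦ x ^ a * besselI ν x) (Ici 0) := by
  have hpow : Continuous fun x : ℝ ↦ x ^ (a + ν) :=
    continuous_id.rpow_const fun _ ↦ Or.inr haν.le
  refine Continuous.continuousOn (f := fun x ↦
    (1 / 2) ^ ν * (x ^ (a + ν) * besselClifford ν ((x / 2) ^ 2))) (by fun_prop) |>.congr
    fun x hx ↦ ?_
  rcases (mem_Ici.mp hx).eq_or_lt with rfl | hx
  · simp [Real.zero_rpow ha.ne', Real.zero_rpow haν.ne']
  · exact rpow_mul_besselI a ν hx

theorem intervalIntegrable_rpow_mul_besselI {a ν x : ℝ} (haν : -1 < a + ν) (hx : 0 ≤ x) :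
    IntervalIntegrable (fun t ↦ t ^ a * besselI ν t) volume 0 x := by
  have hClifford : Continuous fun t : ℝ ↦ besselClifford ν ((t / 2) ^ 2) := by fun_prop
  refine (((intervalIntegral.intervalIntegrable_rpow' haν).mul_continuousOn
    hClifford.continuousOn).const_mul ((1 / 2) ^ ν)).congr fun t ht ↦ ?_
  rw [uIoc_of_le hx] at ht
  exact (rpow_mul_besselI a ν ht.1).symm

/-! ### The function `K_μ` -/

theorem sq_div_two_le_cosh (t : ℝ) : t ^ 2 / 2 ≤ Real.cosh t := by
  have hsinh : (t / 2) ^ 2 ≤ Real.sinh (t / 2) ^ 2 := by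
    rw [sq_le_sq, Real.abs_sinh]
    exact Real.self_le_sinh_iff.mpr (abs_nonneg _)
  have hcosh := Real.cosh_two_mul (t / 2)
  rw [Real.cosh_sq, mul_div_cancel₀ t two_ne_zero] at hcosh
  linarith

theorem integrable_exp_neg_mul_cosh_add_mul (μ : ℝ) {x : ℝ} (hx : 0 < x) :
    Integrable fun t ↦ Real.exp (-x * Real.cosh t + μ * t) := by
  have hgauss := ((integrable_exp_neg_mul_sq (half_pos hx)).comp_sub_right (μ / x)).const_mul
    (Real.exp (μ ^ 2 / (2 * x)))
  refine hgauss.mono' (by fun_prop) (.of_forall fun t ↦ ?_)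
  rw [Real.norm_eq_abs, Real.abs_exp, ← Real.exp_add, Real.exp_le_exp]
  have hcosh := mul_le_mul_of_nonneg_left (sq_div_two_le_cosh t) hx.le
  calc -x * Real.cosh t + μ * t ≤ -x * (t ^ 2 / 2) + μ * t := by linarith
    _ = μ ^ 2 / (2 * x) + -(x / 2) * (t - μ / x) ^ 2 := by field_simp; ring

theorem exp_neg_mul_cosh_mul_cosh (μ x t : ℝ) :
    Real.exp (-x * Real.cosh t) * Real.cosh (μ * t) =
      1 / 2 * (Real.exp (-x * Real.cosh t + μ * t) +
        Real.exp (-x * Real.cosh (-t) + μ * -t)) := by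
  rw [Real.cosh_neg, Real.cosh_eq (μ * t), Real.exp_add, Real.exp_add, mul_neg]
  ring

theorem besselK_eq_half_integral (μ : ℝ) {x : ℝ} (hx : 0 < x) :
    besselK μ x = 1 / 2 * ∫ t, Real.exp (-x * Real.cosh t + μ * t) := by
  have hint := integrable_exp_neg_mul_cosh_add_mul μ hx
  have hreflect := integral_comp_neg_Ioi 0 fun t ↦ Real.exp (-x * Real.cosh t + μ * t)
  rw [neg_zero] at hreflect
  rw [← intervalIntegral.integral_Iic_add_Ioi hint.integrableOn hint.integrableOn, ← hreflect,
    add_comm, ← integral_add hint.integrableOn hint.comp_neg.integrableOn, ← integral_const_mul]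
  exact integral_congr_ae (.of_forall (exp_neg_mul_cosh_mul_cosh μ x))

theorem integrable_exp_neg_mul_cosh_mul_cosh (μ : ℝ) {x : ℝ} (hx : 0 < x) :
    Integrable fun t ↦ Real.exp (-x * Real.cosh t) * Real.cosh (μ * t) := by
  have hint := integrable_exp_neg_mul_cosh_add_mul μ hx
  rw [funext (exp_neg_mul_cosh_mul_cosh μ x)]
  exact (hint.add hint.comp_neg).const_mul _

theorem besselK_nonneg (μ x : ℝ) : 0 ≤ besselK μ x :=
  integral_nonneg fun _ ↦ mul_nonneg (Real.exp_pos _).le (Real.cosh_pos _).le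

theorem besselK_le_besselK {μ μ' x : ℝ} (hμ : |μ| ≤ |μ'|) (hx : 0 < x) :
    besselK μ x ≤ besselK μ' x := by
  refine integral_mono (integrable_exp_neg_mul_cosh_mul_cosh μ hx).integrableOn
    (integrable_exp_neg_mul_cosh_mul_cosh μ' hx).integrableOn fun t ↦ ?_
  have hcosh : Real.cosh (μ * t) ≤ Real.cosh (μ' * t) := by
    rw [Real.cosh_le_cosh, abs_mul, abs_mul]
    gcongr
  dsimp only
  gcongr

theorem exp_neg_mul_cosh_add_mul_mul_cosh (μ x t : ℝ) :
    Real.exp (-x * Real.cosh t + μ * t) * Real.cosh t =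
      1 / 2 * (Real.exp (-x * Real.cosh t + (μ + 1) * t) +
        Real.exp (-x * Real.cosh t + (μ - 1) * t)) := by
  rw [Real.cosh_eq t, add_mul, sub_mul, one_mul, ← add_assoc, ← add_sub_assoc, Real.exp_add _ t,
    sub_eq_add_neg, Real.exp_add _ (-t)]
  ring

theorem exp_neg_mul_cosh_add_mul_mul_sinh (μ x t : ℝ) :
    Real.exp (-x * Real.cosh t + μ * t) * Real.sinh t =
      1 / 2 * (Real.exp (-x * Real.cosh t + (μ + 1) * t) -
        Real.exp (-x * Real.cosh t + (μ - 1) * t)) := by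
  rw [Real.sinh_eq t, add_mul, sub_mul, one_mul, ← add_assoc, ← add_sub_assoc, Real.exp_add _ t,
    sub_eq_add_neg (_ + _) t, Real.exp_add _ (-t)]
  ring

theorem besselK_recurrence (μ : ℝ) {x : ℝ} (hx : 0 < x) :
    2 * μ * besselK μ x = x * (besselK (μ + 1) x - besselK (μ - 1) x) := by
  have hint (κ : ℝ) := integrable_exp_neg_mul_cosh_add_mul κ hx
  have hderiv (t : ℝ) : HasDerivAt (fun t ↦ Real.exp (-x * Real.cosh t + μ * t))
      (μ * Real.exp (-x * Real.cosh t + μ * t) -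
        x / 2 * (Real.exp (-x * Real.cosh t + (μ + 1) * t) -
          Real.exp (-x * Real.cosh t + (μ - 1) * t))) t := by
    convert! (((Real.hasDerivAt_cosh t).const_mul (-x)).add
      ((hasDerivAt_id t).const_mul μ)).exp using 1
    simp only [id]
    linear_combination x * exp_neg_mul_cosh_add_mul_mul_sinh μ x t
  have hdiff : Integrable fun t ↦ x / 2 * (Real.exp (-x * Real.cosh t + (μ + 1) * t) -
      Real.exp (-x * Real.cosh t + (μ - 1) * t)) := ((hint _).sub (hint _)).const_mul _
  have hzero := integral_eq_zero_of_hasDerivAt_of_integrable hderiv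
    (((hint μ).const_mul _).sub hdiff) (hint μ)
  rw [integral_sub ((hint μ).const_mul _) hdiff, integral_const_mul, integral_const_mul,
    integral_sub (hint _) (hint _)] at hzero
  simp only [besselK_eq_half_integral _ hx]
  linarith

theorem hasDerivAt_besselK_neg_add_div_two (μ : ℝ) {x : ℝ} (hx : 0 < x) :
    HasDerivAt (besselK μ) (-(besselK (μ + 1) x + besselK (μ - 1) x) / 2) x := by
  have hint (κ : ℝ) {y : ℝ} (hy : 0 < y) := integrable_exp_neg_mul_cosh_add_mul κ hy
  have hbound_integrable : Integrable fun t ↦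
      Real.exp (-(x / 2) * Real.cosh t + μ * t) * Real.cosh t := by
    simp only [exp_neg_mul_cosh_add_mul_mul_cosh]
    exact ((hint _ (half_pos hx)).add (hint _ (half_pos hx))).const_mul _
  have hderiv := (hasDerivAt_integral_of_dominated_loc_of_deriv_le
    (F := fun y t ↦ Real.exp (-y * Real.cosh t + μ * t))
    (F' := fun y t ↦ -(Real.exp (-y * Real.cosh t + μ * t) * Real.cosh t))
    (Ioi_mem_nhds (half_lt_self hx)) (.of_forall fun y ↦ by fun_prop) (hint μ hx) (by fun_prop)
    (.of_forall fun t y hy ↦ ?_) hbound_integrable (.of_forall fun t y _ ↦ ?_)).2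
  · have heq : besselK μ =ᶠ[𝓝 x] fun y ↦ 1 / 2 * ∫ t, Real.exp (-y * Real.cosh t + μ * t) := by
      filter_upwards [lt_mem_nhds hx] with y hy using besselK_eq_half_integral μ hy
    convert! (hderiv.const_mul (1 / 2)).congr_of_eventuallyEq heq using 1
    simp only [exp_neg_mul_cosh_add_mul_mul_cosh, besselK_eq_half_integral _ hx]
    rw [integral_neg, integral_const_mul, integral_add (hint _ hx) (hint _ hx)]
    ring
  · rw [norm_neg, Real.norm_of_nonneg (mul_nonneg (Real.exp_pos _).le (Real.cosh_pos _).le)]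
    have := Real.cosh_pos t
    have := (mem_Ioi.mp hy).le
    gcongr
  · convert! (((hasDerivAt_id y).neg.mul_const (Real.cosh t)).add_const (μ * t)).exp using 1
    simp only [Pi.neg_apply, id]
    ring

theorem hasDerivAt_besselK (μ : ℝ) {x : ℝ} (hx : 0 < x) :
    HasDerivAt (besselK μ) (-besselK (μ + 1) x + μ / x * besselK μ x) x := by
  convert! hasDerivAt_besselK_neg_add_div_two μ hx using 1
  have hrec := besselK_recurrence μ hx
  field_simp
  linear_combination hrec

theorem hasDerivAt_besselK_add_one (μ : ℝ) {x : ℝ} (hx : 0 < x) :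
    HasDerivAt (besselK (μ + 1)) (-besselK μ x - (μ + 1) / x * besselK (μ + 1) x) x := by
  convert! hasDerivAt_besselK_neg_add_div_two (μ + 1) hx using 1
  have hrec := besselK_recurrence (μ + 1) hx
  rw [add_sub_cancel_right] at hrec ⊢
  field_simp
  linear_combination -hrec

theorem rpow_mul_besselK_eq_integral (μ : ℝ) {x : ℝ} (hx : 0 < x) :
    (x / 2) ^ μ * besselK μ x =
      1 / 2 * ∫ u in Ioi 0, Real.exp (-u - (x / 2) ^ 2 / u) * u ^ (μ - 1) := by
  have hx2 : 0 < x / 2 := half_pos hx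
  have himage : (fun t ↦ x / 2 * Real.exp t) '' univ = Ioi 0 := by
    ext u
    simp only [image_univ, mem_range, mem_Ioi]
    refine ⟨fun ⟨t, ht⟩ ↦ ht ▸ by positivity, fun hu ↦ ⟨Real.log (u / (x / 2)), ?_⟩⟩
    rw [Real.exp_log (by positivity)]
    field_simp
  have hsubst := integral_image_eq_integral_abs_deriv_smul MeasurableSet.univ
    (fun t _ ↦ ((Real.hasDerivAt_exp t).const_mul (x / 2)).hasDerivWithinAt)
    (fun s _ t _ hst ↦ Real.exp_injective (mul_left_cancel₀ hx2.ne' hst))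
    (fun u ↦ Real.exp (-u - (x / 2) ^ 2 / u) * u ^ (μ - 1))
  rw [himage, setIntegral_univ] at hsubst
  rw [besselK_eq_half_integral μ hx, hsubst, mul_left_comm, ← integral_const_mul]
  congr 2 with t
  have hexponent : -(x / 2 * Real.exp t) - (x / 2) ^ 2 / (x / 2 * Real.exp t) =
      -x * Real.cosh t := by
    rw [Real.cosh_eq, Real.exp_neg]
    field_simp
    ring
  rw [hexponent, smul_eq_mul, abs_of_pos (by positivity), Real.rpow_sub_one (by positivity),
    Real.mul_rpow hx2.le (Real.exp_pos t).le, ← Real.exp_mul, Real.exp_add, mul_comm t μ]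
  field_simp

theorem tendsto_rpow_mul_besselK {μ : ℝ} (hμ : 0 < μ) :
    Tendsto (fun x ↦ (x / 2) ^ μ * besselK μ x) (𝓝[>] 0) (𝓝 (Real.Gamma μ / 2)) := by
  have hlim : Tendsto (fun x ↦ ∫ u in Ioi 0, Real.exp (-u - (x / 2) ^ 2 / u) * u ^ (μ - 1))
      (𝓝[>] 0) (𝓝 (∫ u in Ioi 0, Real.exp (-u) * u ^ (μ - 1))) := by
    refine tendsto_integral_filter_of_dominated_convergence _
      (.of_forall fun x ↦ by fun_prop) ?_ (Real.GammaIntegral_convergent hμ) ?_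
    · refine .of_forall fun x ↦ (ae_restrict_mem measurableSet_Ioi).mono fun u hu ↦ ?_
      have hu : 0 < u := hu
      rw [Real.norm_of_nonneg (by positivity)]
      gcongr
      exact sub_le_self _ (by positivity)
    · refine .of_forall fun u ↦ ?_
      have hcont : Continuous fun x : ℝ ↦
          Real.exp (-u - (x / 2) ^ 2 / u) * u ^ (μ - 1) := by fun_prop
      simpa using (hcont.tendsto 0).mono_left nhdsWithin_le_nhds
  rw [Real.Gamma_eq_integral hμ, div_eq_inv_mul, ← one_div]
  refine (hlim.const_mul (1 / 2)).congr' ?_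
  filter_upwards [self_mem_nhdsWithin] with x hx using (rpow_mul_besselK_eq_integral μ hx).symm

/-! ### The Wronskian of `I_μ` and `K_μ` -/

theorem hasDerivAt_mul_besselI_besselK_cross (μ : ℝ) {x : ℝ} (hx : 0 < x) :
    HasDerivAt (fun x ↦ x * (besselI μ x * besselK (μ + 1) x + besselI (μ + 1) x * besselK μ x))
      0 x := by
  convert! (hasDerivAt_id x).mul
    (((hasDerivAt_besselI μ hx).mul (hasDerivAt_besselK_add_one μ hx)).add
      ((hasDerivAt_besselI_add_one μ hx).mul (hasDerivAt_besselK μ hx))) using 1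
  simp only [id, Pi.add_apply, Pi.mul_apply]
  field_simp
  ring

theorem tendsto_mul_besselI_besselK_cross {μ : ℝ} (hμ : 0 < μ) :
    Tendsto (fun x ↦ x * (besselI μ x * besselK (μ + 1) x + besselI (μ + 1) x * besselK μ x))
      (𝓝[>] 0) (𝓝 1) := by
  have hClifford (κ : ℝ) : Tendsto (fun x : ℝ ↦ besselClifford κ ((x / 2) ^ 2)) (𝓝[>] 0)
      (𝓝 (besselClifford κ 0)) := by
    have hcont : Continuous fun x : ℝ ↦ besselClifford κ ((x / 2) ^ 2) := by fun_prop
    simpa using (hcont.tendsto 0).mono_left nhdsWithin_le_nhds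
  have hsq : Tendsto (fun x : ℝ ↦ (x / 2) ^ 2) (𝓝[>] 0) (𝓝 0) := by
    have hcont : Continuous fun x : ℝ ↦ (x / 2) ^ 2 := by fun_prop
    simpa using (hcont.tendsto 0).mono_left nhdsWithin_le_nhds
  have hlim := (((hClifford μ).mul (tendsto_rpow_mul_besselK (add_pos hμ one_pos))).add
    (hsq.mul ((hClifford (μ + 1)).mul (tendsto_rpow_mul_besselK hμ)))).const_mul 2
  have hvalue : 2 * (besselClifford μ 0 * (Real.Gamma (μ + 1) / 2) +
      0 * (besselClifford (μ + 1) 0 * (Real.Gamma μ / 2))) = 1 := by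
    have := (Real.Gamma_pos_of_pos (add_pos hμ one_pos)).ne'
    rw [besselClifford_zero]
    field_simp
    ring
  rw [hvalue] at hlim
  refine hlim.congr' ?_
  filter_upwards [self_mem_nhdsWithin] with x hx
  have hx : 0 < x := hx
  rw [besselI_eq_rpow_mul_besselClifford μ hx, besselI_eq_rpow_mul_besselClifford (μ + 1) hx,
    Real.rpow_add_one (by positivity)]
  ring

theorem besselI_besselK_wronskian {μ x : ℝ} (hμ : 0 < μ) (hx : 0 < x) :
    x * (besselI μ x * besselK (μ + 1) x + besselI (μ + 1) x * besselK μ x) = 1 := by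
  have hderiv {y : ℝ} (hy : y ∈ Ioi 0) := hasDerivAt_mul_besselI_besselK_cross μ (mem_Ioi.mp hy)
  refine tendsto_nhds_unique (tendsto_const_nhds.congr' ?_) (tendsto_mul_besselI_besselK_cross hμ)
  filter_upwards [self_mem_nhdsWithin] with y hy
  exact isOpen_Ioi.is_const_of_deriv_eq_zero (convex_Ioi 0).isPreconnected
    (fun z hz ↦ (hderiv hz).differentiableAt.differentiableWithinAt)
    (fun z hz ↦ (hderiv hz).deriv) hx hy

theorem sq_mul_besselK_mul_besselI_add_le {ν x : ℝ} (hν : -(1 / 2) ≤ ν) (hx : 0 < x) :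
    x ^ 2 * besselK (ν + 2) x * (besselI ν x + besselI (ν + 1) x) ≤ 2 * ν + 2 + x := by
  have hW := besselI_besselK_wronskian (show 0 < ν + 1 by linarith) hx
  have hI := besselI_recurrence ν hx
  have hK : besselK ν x ≤ besselK (ν + 1) x :=
    besselK_le_besselK (abs_le_abs (by linarith) (by linarith)) hx
  have hKrec := besselK_recurrence (ν + 1) hx
  rw [add_sub_cancel_right] at hKrec
  rw [show ν + 1 + 1 = ν + 2 by ring] at hW hKrec
  have hcorrection : 0 ≤ x ^ 2 * besselI (ν + 2) x * (besselK (ν + 1) x - besselK ν x) :=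
    mul_nonneg (mul_nonneg (sq_nonneg x) (besselI_pos (by linarith) hx).le) (sub_nonneg.mpr hK)
  calc x ^ 2 * besselK (ν + 2) x * (besselI ν x + besselI (ν + 1) x)
      = (2 * ν + 2 + x) * (x * (besselI (ν + 1) x * besselK (ν + 2) x +
          besselI (ν + 2) x * besselK (ν + 1) x)) -
        x ^ 2 * besselI (ν + 2) x * (besselK (ν + 1) x - besselK ν x) := by
        linear_combination (-x * besselK (ν + 2) x) * hI - x * besselI (ν + 2) x * hKrec
    _ ≤ 2 * ν + 2 + x := by rw [hW]; linarith

/-! ### The integral of `e^{βt} t^ν I_ν(t)` -/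

/-- The function `t^{ν+1} (I_ν(t) + I_{ν+1}(t))`, whose derivative exceeds it by
`(2ν+1) t^ν I_ν(t)`; the integral of `e^{βt} t^ν I_ν(t)` is compared with multiples of it. -/
noncomputable def besselISum (ν t : ℝ) : ℝ :=
  t ^ (ν + 1) * (besselI ν t + besselI (ν + 1) t)

theorem hasDerivAt_besselISum (ν : ℝ) {t : ℝ} (ht : 0 < t) :
    HasDerivAt (besselISum ν) (besselISum ν t + (2 * ν + 1) * (t ^ ν * besselI ν t)) t := by
  convert! (Real.hasDerivAt_rpow_const (p := ν + 1) (Or.inl ht.ne')).mul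
    ((hasDerivAt_besselI ν ht).add (hasDerivAt_besselI_add_one ν ht)) using 1
  simp only [besselISum, Pi.add_apply]
  rw [add_sub_cancel_right, Real.rpow_add_one ht.ne']
  field_simp
  ring

theorem mul_rpow_mul_besselI_le_besselISum {ν t : ℝ} (hν : -2 < ν) (ht : 0 < t) :
    t * (t ^ ν * besselI ν t) ≤ besselISum ν t := by
  have hI := besselI_pos (show -1 < ν + 1 by linarith) ht
  rw [besselISum, Real.rpow_add_one ht.ne', ← mul_assoc, mul_comm t]
  gcongr
  exact le_add_of_nonneg_right hI.le

theorem continuousOn_besselISum {ν : ℝ} (hν : -(1 / 2) < ν) :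
    ContinuousOn (besselISum ν) (Ici 0) := by
  exact ((continuousOn_rpow_mul_besselI (by linarith) (by linarith)).add
    (continuousOn_rpow_mul_besselI (by linarith) (by linarith))).congr fun t _ ↦ mul_add _ _ _

/-- A majorant of `∫₀ᵗ e^{βs} s^ν I_ν(s) ds`. Multiplying `e^{βt} t^{ν+1} (I_ν(t) + I_{ν+1}(t))` by
`1 / (2ν+1)` gives the right order at `t = 0`, by `1 / (1+β)` the right order at `t = ∞`; the
rational factor used here interpolates between the two. -/
noncomputable def besselIMajorant (β ν t : ℝ) : ℝ :=
  Real.exp (β * t) * besselISum ν t *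
    ((2 * ν + 2) / ((2 * ν + 1) * (2 * ν + 2 + (1 + β) * t)))

theorem hasDerivAt_besselIMajorant {β ν t : ℝ} (hβ : -1 ≤ β) (hν : -(1 / 2) < ν) (ht : 0 < t) :
    HasDerivAt (besselIMajorant β ν)
      (Real.exp (β * t) * ((2 * ν + 2) / ((2 * ν + 1) * (2 * ν + 2 + (1 + β) * t))) *
        ((1 + β) * (1 - 1 / (2 * ν + 2 + (1 + β) * t)) * besselISum ν t +
          (2 * ν + 1) * (t ^ ν * besselI ν t))) t := by
  have hν' : 0 < 2 * ν + 1 := by linarith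
  have hdenom : 0 < 2 * ν + 2 + (1 + β) * t := by nlinarith
  have hexp : HasDerivAt (fun t ↦ Real.exp (β * t)) (Real.exp (β * t) * β) t := by
    simpa using ((hasDerivAt_id t).const_mul β).exp
  have hlin : HasDerivAt (fun t ↦ (2 * ν + 1) * (2 * ν + 2 + (1 + β) * t))
      ((2 * ν + 1) * (1 + β)) t := by
    simpa using (((hasDerivAt_id t).const_mul (1 + β)).const_add (2 * ν + 2)).const_mul (2 * ν + 1)
  convert! (hexp.mul (hasDerivAt_besselISum ν ht)).mul
    ((hasDerivAt_const t (2 * ν + 2)).div hlin (mul_pos hν' hdenom).ne') using 1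
  simp only [Pi.mul_apply, Pi.div_apply]
  generalize 2 * ν + 2 + (1 + β) * t = d at *
  field_simp
  ring

theorem one_le_div_mul_mul_one_sub_add {a s : ℝ} (ha : 1 < a) (hs : 0 ≤ s) :
    1 ≤ a / ((a - 1) * (a + s)) * (s * (1 - 1 / (a + s)) + (a - 1)) := by
  have ha' : 0 < a - 1 := sub_pos.mpr ha
  have : 0 < a + s := by linarith
  calc 1 ≤ 1 + s ^ 2 / ((a - 1) * (a + s) ^ 2) := le_add_of_nonneg_right (by positivity)
    _ = _ := by field_simp; ring

theorem exp_mul_rpow_mul_besselI_le_deriv_besselIMajorant {β ν t : ℝ} (hβ : -1 ≤ β)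
    (hν : -(1 / 2) < ν) (ht : 0 < t) :
    Real.exp (β * t) * (t ^ ν * besselI ν t) ≤ deriv (besselIMajorant β ν) t := by
  have hν' : 0 < 2 * ν + 1 := by linarith
  have hβ' : 0 ≤ 1 + β := by linarith
  have hdenom : 1 ≤ 2 * ν + 2 + (1 + β) * t := by nlinarith
  have hfactor : 0 ≤ 1 - 1 / (2 * ν + 2 + (1 + β) * t) :=
    sub_nonneg.mpr ((div_le_one (by linarith)).mpr hdenom)
  have hI := besselI_pos (show -1 < ν by linarith) ht
  have hsum := mul_rpow_mul_besselI_le_besselISum (show -2 < ν by linarith) ht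
  have hinterp := one_le_div_mul_mul_one_sub_add (show 1 < 2 * ν + 2 by linarith)
    (mul_nonneg hβ' ht.le)
  rw [show 2 * ν + 2 - 1 = 2 * ν + 1 by ring] at hinterp
  rw [(hasDerivAt_besselIMajorant hβ hν ht).deriv, mul_assoc]
  refine mul_le_mul_of_nonneg_left ?_ (Real.exp_pos _).le
  calc t ^ ν * besselI ν t
      ≤ (2 * ν + 2) / ((2 * ν + 1) * (2 * ν + 2 + (1 + β) * t)) *
          ((1 + β) * t * (1 - 1 / (2 * ν + 2 + (1 + β) * t)) + (2 * ν + 1)) *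
          (t ^ ν * besselI ν t) := le_mul_of_one_le_left (by positivity) hinterp
    _ = (2 * ν + 2) / ((2 * ν + 1) * (2 * ν + 2 + (1 + β) * t)) *
          ((1 + β) * (1 - 1 / (2 * ν + 2 + (1 + β) * t)) * (t * (t ^ ν * besselI ν t)) +
            (2 * ν + 1) * (t ^ ν * besselI ν t)) := by ring
    _ ≤ _ := by
        have hnum : 0 < 2 * ν + 2 := by linarith
        have : 0 < 2 * ν + 2 + (1 + β) * t := by linarith
        gcongr

theorem continuousOn_besselIMajorant {β ν : ℝ} (hβ : -1 ≤ β) (hν : -(1 / 2) < ν) :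
    ContinuousOn (besselIMajorant β ν) (Ici 0) := by
  refine ContinuousOn.mul (ContinuousOn.mul (by fun_prop) (continuousOn_besselISum hν))
    (ContinuousOn.div (by fun_prop) (by fun_prop) fun t ht ↦ ?_)
  have hprod : 0 ≤ (1 + β) * t := mul_nonneg (by linarith) ht
  exact mul_ne_zero (by linarith) (by linarith)

theorem integral_exp_mul_rpow_mul_besselI_le {β ν x : ℝ} (hβ : -1 ≤ β) (hν : -(1 / 2) < ν)
    (hx : 0 ≤ x) :
    ∫ t in 0..x, Real.exp (β * t) * (t ^ ν * besselI ν t) ≤ besselIMajorant β ν x := by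
  have hint : IntervalIntegrable (fun t ↦ Real.exp (β * t) * (t ^ ν * besselI ν t)) volume 0 x :=
    (intervalIntegrable_rpow_mul_besselI (by linarith) hx).continuousOn_mul (by fun_prop)
  have hzero : besselIMajorant β ν 0 = 0 := by
    simp [besselIMajorant, besselISum, Real.zero_rpow (show ν + 1 ≠ 0 by linarith)]
  have hcont := (continuousOn_besselIMajorant hβ hν).mono (Icc_subset_Ici_self : Icc 0 x ⊆ Ici 0)
  have hderiv {t : ℝ} (ht : 0 < t) :
      HasDerivAt (besselIMajorant β ν) (deriv (besselIMajorant β ν) t) t :=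
    (hasDerivAt_besselIMajorant hβ hν ht).differentiableAt.hasDerivAt
  simpa [hzero] using intervalIntegral.integral_le_sub_of_hasDeriv_right_of_le hx hcont
    (fun t ht ↦ (hderiv ht.1).hasDerivWithinAt)
    ((intervalIntegrable_iff_integrableOn_Icc_of_le hx).mp hint)
    (fun t ht ↦ exp_mul_rpow_mul_besselI_le_deriv_besselIMajorant hβ hν ht.1)

theorem besselK_mul_integral_le {β ν x : ℝ} (hβ : -1 ≤ β) (hν : -(1 / 2) < ν) (hx : 0 < x) :
    Real.exp (-β * x) * besselK (ν + 2) x / x ^ (ν - 1) *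
        ∫ t in 0..x, Real.exp (β * t) * t ^ ν * besselI ν t ≤
      (2 * ν + 2) * (2 * ν + 2 + x) / ((2 * ν + 1) * (2 * ν + 2 + (1 + β) * x)) := by
  have hK := besselK_nonneg (ν + 2) x
  have hν' : 0 < 2 * ν + 1 := by linarith
  have hβ' : 0 ≤ 1 + β := by linarith
  have hnum : 0 < 2 * ν + 2 := by linarith
  have hpow : x ^ (ν + 1) = x ^ (ν - 1) * x ^ 2 := by
    rw [← Real.rpow_two, ← Real.rpow_add hx]
    ring_nf
  have hexp : Real.exp (-β * x) * Real.exp (β * x) = 1 := by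
    rw [← Real.exp_add, neg_mul, neg_add_cancel, Real.exp_zero]
  simp only [mul_assoc (Real.exp (β * _))]
  calc Real.exp (-β * x) * besselK (ν + 2) x / x ^ (ν - 1) *
        ∫ t in 0..x, Real.exp (β * t) * (t ^ ν * besselI ν t)
      ≤ Real.exp (-β * x) * besselK (ν + 2) x / x ^ (ν - 1) * besselIMajorant β ν x := by
        gcongr
        exact integral_exp_mul_rpow_mul_besselI_le hβ hν hx.le
    _ = x ^ 2 * besselK (ν + 2) x * (besselI ν x + besselI (ν + 1) x) *
          ((2 * ν + 2) / ((2 * ν + 1) * (2 * ν + 2 + (1 + β) * x))) := by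
        have hpow_ne : x ^ (ν - 1) ≠ 0 := (Real.rpow_pos_of_pos hx _).ne'
        rw [besselIMajorant, besselISum, hpow, div_mul_eq_mul_div, div_eq_iff hpow_ne]
        linear_combination besselK (ν + 2) x * (x ^ (ν - 1) * x ^ 2) *
          (besselI ν x + besselI (ν + 1) x) *
          ((2 * ν + 2) / ((2 * ν + 1) * (2 * ν + 2 + (1 + β) * x))) * hexp
    _ ≤ (2 * ν + 2 + x) * ((2 * ν + 2) / ((2 * ν + 1) * (2 * ν + 2 + (1 + β) * x))) := by
        gcongr
        exact sq_mul_besselK_mul_besselI_add_le hν.le hx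
    _ = _ := by ring

/-- As `x → 0` the left side tends to `(2ν+2) / (2ν+1)`, and `2(ν+1)β ≤ 5` says exactly that the
right side is at least this limit. -/
theorem stmt_11_general {β ν x : ℝ} (hβ : -1 < β) (hβν : 2 * (ν + 1) * β ≤ 5)
    (hν : -(1 / 2) < ν) (hx : 0 < x) :
    Real.exp (-β * x) * besselK (ν + 2) x / x ^ (ν - 1) *
        ∫ t in 0..x, Real.exp (β * t) * t ^ ν * besselI ν t <
      (2 * ν + 7) / ((2 * ν + 1) * (1 + β)) := by
  have hν' : 0 < 2 * ν + 1 := by linarith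
  have hβ' : 0 < 1 + β := by linarith
  have hnum : 0 < 2 * ν + 2 := by linarith
  refine (besselK_mul_integral_le hβ.le hν hx).trans_lt ?_
  rw [div_lt_div_iff₀ (by positivity) (by positivity)]
  nlinarith [mul_pos hν' (mul_pos hβ' hx), mul_nonneg hnum.le (sub_nonneg.2 hβν)]

theorem stmt_11 (β ν : ℝ) (hβ0 : -1 < β) (hβ1 : β < 0) (hν : -(1/2) < ν) (x : ℝ) (hx : 0 < x) :
    (Real.exp (-β * x) * besselK (ν + 2) x / x ^ (ν - 1)) *
        ∫ t in (0 : ℝ)..x, Real.exp (β * t) * t ^ ν * besselI ν t <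
      (2 * ν + 7) / ((2 * ν + 1) * (1 + β)) :=
  stmt_11_general hβ0 (by nlinarith) hν hx
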